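/- With Λ' as above, assume ⟨d₁,d₁⟩ is odd. Then there exist a root δ ∈ Λ' (⟨δ,δ⟩ = −2) and a point ω ∈ Ω_K such that ⟨ω, δ_K⟩ = 0, where the pairing of ω ∈ ℂ⁴ with δ_K ∈ ℚ⁴ is via the ℂ-bilinear extension of the form of K. (The discriminant locus meets the period domain of the odd-type involution.) -/

import Mathlib

/-!
STATEMENT 7: With `Λ'` as in the context and `⟨d₁,d₁⟩` odd, there exist a
root `δ ∈ Λ'` and a point `ω ∈ Ω_K` with `⟨ω, δ_K⟩ = 0` (the pairing via the
ℂ-bilinear extension of the form of K).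
-/

noncomputable section
namespace Stmt7

/-- The bilinear form of K = U(2) ⊕ U(2) on ℚ⁴ (ℚ-bilinear extension):
Gram matrix has blocks [[0,2],[2,0]] and [[0,2],[2,0]]. -/
def bK (x y : Fin 4 → ℚ) : ℚ :=
  2 * (x 0 * y 1 + x 1 * y 0) + 2 * (x 2 * y 3 + x 3 * y 2)

/-- The bilinear form of E = E8(2) on ℚ⁸ (ℚ-bilinear extension):
Gram matrix is −2 times the E8 Cartan matrix. -/
def bE (x y : Fin 8 → ℚ) : ℚ :=
  ∑ i : Fin 8, ∑ j : Fin 8, x i * ((-2 * CartanMatrix.E₈ i j : ℤ) : ℚ) * y j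

/-- `x` lies in the lattice ℤ⁴ ⊂ ℚ⁴. -/
def isInt4 (x : Fin 4 → ℚ) : Prop := ∀ i, ∃ n : ℤ, x i = n

/-- `x` lies in the lattice ℤ⁸ ⊂ ℚ⁸. -/
def isInt8 (x : Fin 8 → ℚ) : Prop := ∀ i, ∃ n : ℤ, x i = n

/-- `x` lies in the dual lattice (1/2)ℤ⁴ ⊂ ℚ⁴ of K. -/
def isHalf4 (x : Fin 4 → ℚ) : Prop := ∀ i, ∃ n : ℤ, x i = n / 2

/-- `x` lies in the dual lattice (1/2)ℤ⁸ ⊂ ℚ⁸ of E. -/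
def isHalf8 (x : Fin 8 → ℚ) : Prop := ∀ i, ∃ n : ℤ, x i = n / 2

/-- The ambient space ℚ⁴ ⊕ ℚ⁸ of K ⊕ E. -/
abbrev V : Type := (Fin 4 → ℚ) × (Fin 8 → ℚ)

/-- The orthogonal direct sum form of K ⊕ E on ℚ⁴ ⊕ ℚ⁸. -/
def bV (x y : V) : ℚ := bK x.1 y.1 + bE x.2 y.2

/-- Membership in the lattice Λ' = ℤ·(d₁,d₂) + (ℤ⁴ ⊕ ℤ⁸) ⊂ ℚ⁴ ⊕ ℚ⁸. -/
def memL (d₁ : Fin 4 → ℚ) (d₂ : Fin 8 → ℚ) (x : V) : Prop :=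
  ∃ n : ℤ, isInt4 (x.1 - (n : ℚ) • d₁) ∧ isInt8 (x.2 - (n : ℚ) • d₂)

/-- The ℂ-bilinear extension of the form of K to ℂ⁴. -/
def bKC (x y : Fin 4 → ℂ) : ℂ :=
  2 * (x 0 * y 1 + x 1 * y 0) + 2 * (x 2 * y 3 + x 3 * y 2)

/-- The period domain Ω_K: ω ∈ ℂ⁴ with ⟨ω,ω⟩ = 0 and ⟨ω,ω̄⟩ a positive real. -/
def OmegaK (ω : Fin 4 → ℂ) : Prop :=
  bKC ω ω = 0 ∧ ∃ t : ℝ, 0 < t ∧ bKC ω (fun i => (starRingEnd ℂ) (ω i)) = (t : ℂ)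

/-- Coercion ℚ⁴ → ℂ⁴. -/
def qc (x : Fin 4 → ℚ) : Fin 4 → ℂ := fun i => ((x i : ℚ) : ℂ)

/-!
In coordinates on the dual lattices, `d₁` and `d₂` are halves of integral vectors. A class of `E8`
modulo `2 E8` whose vectors have norm `≡ 2 mod 4` contains a root: the group generated by the Weyl
group and translations by `2 E8` is an affine reflection group which preserves the assertion, and
it moves every vector into its closed fundamental alcove, where the only lattice vectors are `0`,
the first fundamental weight (of norm `4`) and the highest root. So `d₂ + ℤ⁸` contains a vector of
norm `-1`; the same holds for `d₁ + ℤ⁴` by inspection, and their sum is a root of `Λ'`. Its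
component in `K` has negative norm, so its orthogonal complement in `U(2) ⊕ U(2)` has signature
`(2, 1)` and contains a positive plane, which is a point of `Ω_K`.
-/

section AffineReflection

variable {R M : Type*} [CommRing R] [AddCommGroup M] [Module R M] {B : LinearMap.BilinForm R M}

/-- The reflection in the affine hyperplane `{x | B x s = k}`, for a vector `s` with `B s s = 2`. -/
def affineReflection (B : LinearMap.BilinForm R M) (s : M) (k : R) (x : M) : M :=
  x - (B x s - k) • s

/-- `x` is congruent modulo `2 M` to a root, that is, to a vector of norm `2`. -/
def CongruentToRoot (B : LinearMap.BilinForm R M) (x : M) : Prop :=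
  ∃ r w : M, B r r = 2 ∧ x = r + (2 : R) • w

lemma norm_smul_affineReflection_sub (hB : B.IsSymm) {s : M} (hs : B s s = 2) (k c : R)
    (x p : M) :
    B (c • affineReflection B s k x - p) (c • affineReflection B s k x - p) =
      B (c • x - p) (c • x - p) + 2 * c * (B x s - k) * (B p s - c * k) := by
  simp only [affineReflection, map_sub, map_smul, LinearMap.sub_apply, LinearMap.smul_apply,
    smul_eq_mul, hs, hB.eq s x, hB.eq s p, hB.eq p x]
  ring

lemma norm_affineReflection (hB : B.IsSymm) {s : M} (hs : B s s = 2) (k : R) (x : M) :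
    B (affineReflection B s k x) (affineReflection B s k x) = B x x - 2 * (B x s - k) * k := by
  have h := norm_smul_affineReflection_sub hB hs k 1 x 0
  simp only [one_smul, sub_zero, map_zero, LinearMap.zero_apply] at h
  rw [h]
  ring

lemma CongruentToRoot.of_affineReflection (hB : B.IsSymm) {s x : M} (hs : B s s = 2) {k : R}
    (hk : Even k) (h : CongruentToRoot B (affineReflection B s k x)) : CongruentToRoot B x := by
  obtain ⟨r, w, hr, hx⟩ := h
  obtain ⟨l, rfl⟩ := hk
  have hrs : B r s = 2 * l - (B x s - (l + l)) - 2 * B w s := by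
    have h := congrArg (B · s) hx
    simp only [affineReflection, map_sub, map_add, map_smul, LinearMap.sub_apply,
      LinearMap.add_apply, LinearMap.smul_apply, smul_eq_mul, hs] at h
    linear_combination -h
  refine ⟨affineReflection B s 0 r, w + (l - B w s) • s, ?_, ?_⟩
  · rw [norm_affineReflection hB hs, mul_zero, sub_zero, hr]
  · rw [affineReflection] at hx ⊢
    rw [sub_eq_iff_eq_add.1 hx, hrs]
    module

end AffineReflection

/-- Each reflection in a wall that separates `x` from the interior point `p / N` of the alcove
brings `x` closer to `p / N`. -/
theorem alcove_induction {M : Type*} [AddCommGroup M] {B : LinearMap.BilinForm ℤ M}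
    (hB : B.IsPosSemidef) {ι : Type*} {s : ι → M} {k : ι → ℤ} (hs : ∀ i, B (s i) (s i) = 2)
    {N : ℤ} (hN : 0 < N) {p : M} (hp : ∀ i, N * k i < B p (s i)) {P : M → Prop}
    (alcove : ∀ x, (∀ i, k i ≤ B x (s i)) → P x)
    (reflection : ∀ i x, P (affineReflection B (s i) (k i) x) → P x) (x : M) : P x := by
  induction hn : (B (N • x - p) (N • x - p)).toNat using Nat.strong_induction_on generalizing x with
  | _ n ih =>
    by_cases hx : ∀ i, k i ≤ B x (s i)
    · exact alcove x hx
    push Not at hx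
    obtain ⟨i, hi⟩ := hx
    refine reflection i x (ih _ ?_ _ rfl)
    have hcloser : 2 * N * (B x (s i) - k i) * (B p (s i) - N * k i) < 0 :=
      mul_neg_of_neg_of_pos (mul_neg_of_pos_of_neg (by positivity) (by linarith))
        (by linarith [hp i])
    have hnonneg := hB.nonneg (N • affineReflection B (s i) (k i) x - p)
    have hnorm := norm_smul_affineReflection_sub hB.isSymm (hs i) (k i) N x p
    omega

section PosSemidef

variable {n R : Type*} [Fintype n] [DecidableEq n] [CommRing R] [LinearOrder R]
  [IsStrictOrderedRing R] {C : Matrix n n R} {m : n → R}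

open Matrix

lemma toBilin'_mul_self_nonneg_of_offDiag_nonpos (hC : C.IsSymm)
    (hoff : ∀ i j, i ≠ j → C i j ≤ 0) (hm : 0 ≤ m) (hCm : 0 ≤ C *ᵥ m) (y : n → R) :
    0 ≤ toBilin' C (m * y) (m * y) := by
  have hterm (i j : n) :
      C i j * (m i * m j) * (y i ^ 2 + y j ^ 2) ≤ 2 * (m i * y i * C i j * (m j * y j)) := by
    rcases eq_or_ne i j with rfl | hij
    · linarith
    · nlinarith [mul_nonneg (mul_nonneg (neg_nonneg.2 (hoff i j hij)) (mul_nonneg (hm i) (hm j)))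
        (sq_nonneg (y i - y j))]
  have hrow : ∑ i, ∑ j, C i j * (m i * m j) * y i ^ 2 = ∑ i, m i * y i ^ 2 * (C *ᵥ m) i := by
    simp only [mulVec, dotProduct, Finset.mul_sum]
    exact Finset.sum_congr rfl fun i _ ↦ Finset.sum_congr rfl fun j _ ↦ by ring
  have hcol : ∑ i, ∑ j, C i j * (m i * m j) * y j ^ 2 =
      ∑ i, ∑ j, C i j * (m i * m j) * y i ^ 2 := by
    rw [Finset.sum_comm]
    exact Finset.sum_congr rfl fun i _ ↦ Finset.sum_congr rfl fun j _ ↦ by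
      rw [hC.apply, mul_comm (m j)]
  have hrow_nonneg : 0 ≤ ∑ i, m i * y i ^ 2 * (C *ᵥ m) i :=
    Finset.sum_nonneg fun i _ ↦ mul_nonneg (mul_nonneg (hm i) (sq_nonneg _)) (hCm i)
  have hsum := Finset.sum_le_sum fun i (_ : i ∈ Finset.univ) ↦
    Finset.sum_le_sum fun j (_ : j ∈ Finset.univ) ↦ hterm i j
  simp only [mul_add, Finset.sum_add_distrib, ← Finset.mul_sum, hcol, hrow] at hsum
  rw [toBilin'_apply]
  simp only [Pi.mul_apply]
  linarith

theorem isPosSemidef_toBilin'_of_offDiag_nonpos (hC : C.IsSymm)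
    (hoff : ∀ i j, i ≠ j → C i j ≤ 0) (hm : ∀ i, 0 < m i) (hCm : 0 ≤ C *ᵥ m) :
    (toBilin' C).IsPosSemidef where
  isSymm := isSymm_toBilin'_iff_isSymm.2 hC
  nonneg x := by
    -- Clear the denominators of `y = x / m`, which lies outside `R` in general.
    have hprod : (∏ i, m i) • x = m * fun i ↦ (∏ j ∈ Finset.univ.erase i, m j) * x i := by
      ext i
      simp [← mul_assoc, Finset.mul_prod_erase]
    have h := toBilin'_mul_self_nonneg_of_offDiag_nonpos hC hoff (fun i ↦ (hm i).le)
      hCm fun i ↦ (∏ j ∈ Finset.univ.erase i, m j) * x i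
    simp only [← hprod, map_smul, LinearMap.smul_apply, smul_eq_mul] at h
    have hpos : 0 < ∏ i, m i := Finset.prod_pos fun i _ ↦ hm i
    exact nonneg_of_mul_nonneg_right (nonneg_of_mul_nonneg_right h hpos) hpos

end PosSemidef

section E8

open Matrix

/-- The positive definite form of the `E8` lattice in the basis of simple roots. -/
def e8Form : LinearMap.BilinForm ℤ (Fin 8 → ℤ) := toBilin' CartanMatrix.E₈

/-- The highest root of `E8` in the basis of simple roots. -/
def e8HighestRoot : Fin 8 → ℤ := ![2, 3, 4, 6, 5, 4, 3, 2]

/-- The first fundamental weight of `E8` in the basis of simple roots. -/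
def e8FirstWeight : Fin 8 → ℤ := ![4, 5, 7, 10, 8, 6, 4, 2]

/-- The Weyl vector of `E8`, whose product with each simple root is `1`. -/
def e8WeylVector : Fin 8 → ℤ := ![46, 68, 91, 135, 110, 84, 57, 29]

/-- The inner normals of the walls of the fundamental alcove of `E8`: the simple roots, and the
negative of the highest root at `none`. -/
def e8Wall : Option (Fin 8) → Fin 8 → ℤ
  | none => -e8HighestRoot
  | some i => Pi.single i 1

/-- The levels of the walls `{x | e8Form x (e8Wall i) = e8WallLevel i}`. The affine wall is at level
`-2` because the translation lattice is `2 E8`. -/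
def e8WallLevel : Option (Fin 8) → ℤ
  | none => -2
  | some _ => 0

/-- The lattice points of the closed fundamental alcove of `E8` dilated by `2`. -/
def e8Alcove : Set (Fin 8 → ℤ) := {x | ∀ i, e8WallLevel i ≤ e8Form x (e8Wall i)}

lemma e8Form_apply (x y : Fin 8 → ℤ) :
    e8Form x y = x 0 * (2 * y 0 - y 2) + x 1 * (2 * y 1 - y 3) + x 2 * (2 * y 2 - y 0 - y 3) +
      x 3 * (2 * y 3 - y 1 - y 2 - y 4) + x 4 * (2 * y 4 - y 3 - y 5) +
      x 5 * (2 * y 5 - y 4 - y 6) + x 6 * (2 * y 6 - y 5 - y 7) + x 7 * (2 * y 7 - y 6) := by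
  simp only [e8Form, toBilin'_apply, Fin.sum_univ_eight, CartanMatrix.E₈, of_apply, cons_val',
    cons_val_zero, cons_val_one, cons_val, cons_val_fin_one]
  ring

lemma e8Form_isPosSemidef : e8Form.IsPosSemidef :=
  isPosSemidef_toBilin'_of_offDiag_nonpos CartanMatrix.E₈_isSymm
    CartanMatrix.E₈_off_diag_nonpos (m := e8HighestRoot) (by decide) fun i ↦ by revert i; decide

lemma e8Form_wall_self (i : Option (Fin 8)) : e8Form (e8Wall i) (e8Wall i) = 2 := by
  rw [e8Form_apply]
  revert i
  decide

/-- The Weyl vector has product `29` with the highest root, so dividing it by `15` gives a point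
strictly inside the affine wall. -/
lemma mul_e8WallLevel_lt_e8Form_weylVector (i : Option (Fin 8)) :
    15 * e8WallLevel i < e8Form e8WeylVector (e8Wall i) := by
  rw [e8Form_apply]
  revert i
  decide

lemma even_e8WallLevel (i : Option (Fin 8)) : Even (e8WallLevel i) := by
  revert i
  decide

lemma e8Form_simpleRoot (x : Fin 8 → ℤ) (i : Fin 8) :
    e8Form x (Pi.single i 1) =
      ![2 * x 0 - x 2, 2 * x 1 - x 3, 2 * x 2 - x 0 - x 3, 2 * x 3 - x 1 - x 2 - x 4,
        2 * x 4 - x 3 - x 5, 2 * x 5 - x 4 - x 6, 2 * x 6 - x 5 - x 7, 2 * x 7 - x 6] i := by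
  fin_cases i <;> simp [e8Form_apply] <;> ring

lemma e8Form_highestRoot (x : Fin 8 → ℤ) : e8Form x e8HighestRoot = x 7 := by
  simp [e8Form_apply, e8HighestRoot]

lemma inequalities_of_mem_e8Alcove {x : Fin 8 → ℤ} (hx : x ∈ e8Alcove) :
    0 ≤ 2 * x 0 - x 2 ∧ 0 ≤ 2 * x 1 - x 3 ∧ 0 ≤ 2 * x 2 - x 0 - x 3 ∧
      0 ≤ 2 * x 3 - x 1 - x 2 - x 4 ∧ 0 ≤ 2 * x 4 - x 3 - x 5 ∧ 0 ≤ 2 * x 5 - x 4 - x 6 ∧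
      0 ≤ 2 * x 6 - x 5 - x 7 ∧ 0 ≤ 2 * x 7 - x 6 ∧ x 7 ≤ 2 := by
  have hsimple (i : Fin 8) := (hx (some i)).trans_eq (e8Form_simpleRoot x i)
  have hhighest : -2 ≤ -x 7 := by
    rw [← e8Form_highestRoot x, ← map_neg]
    exact hx none
  exact ⟨hsimple 0, hsimple 1, hsimple 2, hsimple 3, hsimple 4, hsimple 5, hsimple 6, hsimple 7,
    neg_le_neg_iff.1 hhighest⟩

/-- The highest root has mark at least `3` at every simple root other than the first and the last,
so the other coefficients vanish on the alcove. -/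
lemma eq_smul_add_smul_of_mem_e8Alcove {x : Fin 8 → ℤ} (hx : x ∈ e8Alcove) :
    x = (2 * x 0 - x 2) • e8FirstWeight + (2 * x 7 - x 6) • e8HighestRoot := by
  obtain ⟨h0, h1, h2, h3, h4, h5, h6, h7, hhighest⟩ := inequalities_of_mem_e8Alcove hx
  have hmarks : 2 * (2 * x 0 - x 2) + 3 * (2 * x 1 - x 3) + 4 * (2 * x 2 - x 0 - x 3) +
      6 * (2 * x 3 - x 1 - x 2 - x 4) + 5 * (2 * x 4 - x 3 - x 5) + 4 * (2 * x 5 - x 4 - x 6) +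
      3 * (2 * x 6 - x 5 - x 7) + 2 * (2 * x 7 - x 6) = x 7 := by
    ring
  have hmiddle : 2 * x 1 - x 3 = 0 ∧ 2 * x 2 - x 0 - x 3 = 0 ∧ 2 * x 3 - x 1 - x 2 - x 4 = 0 ∧
      2 * x 4 - x 3 - x 5 = 0 ∧ 2 * x 5 - x 4 - x 6 = 0 ∧ 2 * x 6 - x 5 - x 7 = 0 := by
    refine ⟨?_, ?_, ?_, ?_, ?_, ?_⟩ <;>
      exact le_antisymm (Int.lt_add_one_iff.1 (by linarith [hmarks])) ‹_›
  obtain ⟨hm1, hm2, hm3, hm4, hm5, hm6⟩ := hmiddle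
  ext i
  fin_cases i <;>
    simp only [e8FirstWeight, e8HighestRoot, Pi.add_apply, Pi.smul_apply, smul_eq_mul,
      Fin.zero_eta, Fin.mk_one, Fin.reduceFinMk, cons_val_zero, cons_val_one, cons_val] <;>
    linarith

lemma eq_of_mem_e8Alcove {x : Fin 8 → ℤ} (hx : x ∈ e8Alcove) :
    x = 0 ∨ x = e8FirstWeight ∨ x = e8HighestRoot := by
  have hcomb := eq_smul_add_smul_of_mem_e8Alcove hx
  have hseven : x 7 = (2 * x 0 - x 2) * 2 + (2 * x 7 - x 6) * 2 := congrFun hcomb 7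
  obtain ⟨hfirst, -, -, -, -, -, -, hlast, hhighest⟩ := inequalities_of_mem_e8Alcove hx
  have hcoeff : 2 * x 0 - x 2 = 0 ∧ 2 * x 7 - x 6 = 0 ∨ 2 * x 0 - x 2 = 1 ∧ 2 * x 7 - x 6 = 0 ∨
      2 * x 0 - x 2 = 0 ∧ 2 * x 7 - x 6 = 1 := by
    omega
  rcases hcoeff with ⟨ha, hb⟩ | ⟨ha, hb⟩ | ⟨ha, hb⟩ <;>
    simp only [ha, hb, zero_smul, one_smul, zero_add, add_zero] at hcomb
  exacts [.inl hcomb, .inr (.inl hcomb), .inr (.inr hcomb)]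

theorem congruentToRoot_e8Form {x : Fin 8 → ℤ} (hx : e8Form x x ≡ 2 [ZMOD 4]) :
    CongruentToRoot e8Form x := by
  refine alcove_induction (P := fun u ↦ e8Form u u ≡ 2 [ZMOD 4] → CongruentToRoot e8Form u)
    e8Form_isPosSemidef e8Form_wall_self (N := 15) (by norm_num)
    mul_e8WallLevel_lt_e8Form_weylVector (fun u hu hnorm ↦ ?_) (fun i u ih hnorm ↦ ?_) x hx
  · rcases eq_of_mem_e8Alcove hu with rfl | rfl | rfl
    · simp [Int.ModEq] at hnorm
    · exact absurd hnorm (by rw [e8Form_apply]; decide)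
    · exact ⟨e8HighestRoot, 0, by decide, by simp⟩
  · refine .of_affineReflection e8Form_isPosSemidef.isSymm (e8Form_wall_self i)
      (even_e8WallLevel i) (ih ?_)
    rw [norm_affineReflection e8Form_isPosSemidef.isSymm (e8Form_wall_self i)]
    obtain ⟨l, hl⟩ := even_e8WallLevel i
    refine (Int.modEq_iff_dvd.2 ⟨(e8Form u (e8Wall i) - e8WallLevel i) * l, ?_⟩).trans hnorm
    linear_combination 2 * (e8Form u (e8Wall i) - e8WallLevel i) * hl

end E8

lemma exists_intCast_eq_half_sub_half {a b : ℤ} (h : a ≡ b [ZMOD 2]) :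
    ∃ z : ℤ, (b : ℚ) / 2 - a / 2 = z := by
  obtain ⟨z, hz⟩ := h.dvd
  refine ⟨z, ?_⟩
  rw [← sub_div, ← Int.cast_sub, hz]
  simp

lemma bE_half (n : Fin 8 → ℤ) :
    2 * bE (fun i ↦ n i / 2) (fun i ↦ n i / 2) = -(e8Form n n : ℤ) := by
  simp only [bE, e8Form, Matrix.toBilin'_apply, Finset.mul_sum, ← Finset.sum_neg_distrib,
    Int.cast_sum, Int.cast_neg, Int.cast_mul]
  refine Finset.sum_congr rfl fun i _ ↦ Finset.sum_congr rfl fun j _ ↦ ?_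
  push_cast
  ring

theorem exists_bE_eq_neg_one {d : Fin 8 → ℚ} (hd : isHalf8 d) {m : ℤ}
    (hm : bE d d = 2 * m + 1) : ∃ δ : Fin 8 → ℚ, isInt8 (δ - d) ∧ bE δ δ = -1 := by
  choose n hn using hd
  obtain rfl : d = fun i ↦ (n i : ℚ) / 2 := funext hn
  have hnorm : e8Form n n = -(2 * (2 * m + 1)) := by
    have h := bE_half n
    rw [hm] at h
    exact_mod_cast (by linarith : (e8Form n n : ℚ) = -(2 * (2 * m + 1)))
  obtain ⟨r, w, hr, rfl⟩ := congruentToRoot_e8Form (x := n) (by rw [hnorm, Int.ModEq]; omega)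
  refine ⟨fun i ↦ r i / 2, fun i ↦ exists_intCast_eq_half_sub_half ?_, ?_⟩
  · simp [Int.modEq_iff_dvd]
  · have h := bE_half r
    rw [hr] at h
    push_cast at h
    linarith

lemma bK_half (n : Fin 4 → ℤ) :
    bK (fun i ↦ n i / 2) (fun i ↦ n i / 2) = (n 0 * n 1 + n 2 * n 3 : ℤ) := by
  simp only [bK]
  push_cast
  ring

lemma exists_modEq_two_mul_add_mul_eq_neg_one {n : Fin 4 → ℤ}
    (hn : Odd (n 0 * n 1 + n 2 * n 3)) :
    ∃ r : Fin 4 → ℤ, (∀ i, n i ≡ r i [ZMOD 2]) ∧ r 0 * r 1 + r 2 * r 3 = -1 := by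
  have hcases : Odd (n 0) ∧ Odd (n 1) ∧ Even (n 2) ∨ Odd (n 0) ∧ Odd (n 1) ∧ Even (n 3) ∨
      Odd (n 2) ∧ Odd (n 3) ∧ Even (n 0) ∨ Odd (n 2) ∧ Odd (n 3) ∧ Even (n 1) := by
    simp only [Int.odd_add, Int.odd_mul, ← Int.not_odd_iff_even] at hn ⊢
    tauto
  simp only [Fin.forall_fin_succ, Int.ModEq, Int.odd_iff, Int.even_iff] at hcases ⊢
  rcases hcases with h | h | h | h
  · exact ⟨![1, -1, 0, n 3], by simpa using h, by simp⟩
  · exact ⟨![1, -1, n 2, 0], by simpa using h, by simp⟩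
  · exact ⟨![0, n 1, 1, -1], by simpa using and_rotate.2 h, by simp⟩
  · exact ⟨![n 0, 0, 1, -1], by simpa using and_rotate.2 h, by simp⟩

theorem exists_bK_eq_neg_one {d : Fin 4 → ℚ} (hd : isHalf4 d) {m : ℤ}
    (hm : bK d d = 2 * m + 1) : ∃ δ : Fin 4 → ℚ, isInt4 (δ - d) ∧ bK δ δ = -1 := by
  choose n hn using hd
  obtain rfl : d = fun i ↦ (n i : ℚ) / 2 := funext hn
  have hodd : Odd (n 0 * n 1 + n 2 * n 3) := ⟨m, mod_cast (bK_half n).symm.trans hm⟩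
  obtain ⟨r, hnr, hr⟩ := exists_modEq_two_mul_add_mul_eq_neg_one hodd
  refine ⟨fun i ↦ r i / 2, fun i ↦ exists_intCast_eq_half_sub_half (hnr i), ?_⟩
  rw [bK_half, hr]
  simp

/-- Identify `ℂ⁴` with `2 × 2` matrices so that `x` becomes `X = [[x 0, -x 2], [x 3, x 1]]` and the
form becomes the polarization of `4 det`. Then `ω = X * [[1, I], [I, -1]]`, where the second factor
is isotropic, orthogonal to the identity, and has real and imaginary part of determinant `-1`. -/
theorem exists_omegaK_orthogonal {x : Fin 4 → ℚ} (hx : bK x x < 0) :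
    ∃ ω : Fin 4 → ℂ, OmegaK ω ∧ bKC ω (qc x) = 0 := by
  have hpos : (0 : ℝ) < (-2 * bK x x : ℚ) := by
    exact_mod_cast mul_pos_of_neg_of_neg (by norm_num) hx
  refine ⟨![x 0 - Complex.I * x 2, -x 1 + Complex.I * x 3, -(x 2 + Complex.I * x 0),
    x 3 + Complex.I * x 1], ⟨?_, _, hpos, ?_⟩, ?_⟩
  · simp only [bKC, Matrix.cons_val_zero, Matrix.cons_val_one, Matrix.cons_val]
    linear_combination -4 * (x 0 * x 1 + x 2 * x 3 : ℂ) * Complex.I_sq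
  · simp only [bKC, bK, Matrix.cons_val_zero, Matrix.cons_val_one, Matrix.cons_val, map_add,
      map_sub, map_neg, map_mul, map_ratCast, Complex.conj_I]
    push_cast
    linear_combination 4 * (x 0 * x 1 + x 2 * x 3 : ℂ) * Complex.I_sq
  · simp only [bKC, qc, Matrix.cons_val_zero, Matrix.cons_val_one, Matrix.cons_val]
    ring

theorem statement7 (d₁ : Fin 4 → ℚ) (d₂ : Fin 8 → ℚ)
    (hd₁ : isHalf4 d₁) (hd₁' : ¬ isInt4 d₁)
    (hd₂ : isHalf8 d₂) (hd₂' : ¬ isInt8 d₂)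
    (heven : ∃ k : ℤ, bK d₁ d₁ + bE d₂ d₂ = 2 * k)
    (hodd : ∃ m : ℤ, bK d₁ d₁ = 2 * m + 1) :
    ∃ δ : V, memL d₁ d₂ δ ∧ bV δ δ = -2 ∧
      ∃ ω : Fin 4 → ℂ, OmegaK ω ∧ bKC ω (qc δ.1) = 0 := by
  obtain ⟨k, hk⟩ := heven
  obtain ⟨m, hm⟩ := hodd
  obtain ⟨δK, hδK, hnormK⟩ := exists_bK_eq_neg_one hd₁ hm
  obtain ⟨δE, hδE, hnormE⟩ := exists_bE_eq_neg_one hd₂ (m := k - m - 1) (by push_cast; linarith)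
  obtain ⟨ω, hω, horth⟩ := exists_omegaK_orthogonal (hnormK.trans_lt (by norm_num))
  refine ⟨(δK, δE), ⟨1, by simpa using hδK, by simpa using hδE⟩, ?_, ω, hω, horth⟩
  rw [bV, hnormK, hnormE]
  norm_num

end Stmt7
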